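/- Let T be a bounded self-adjoint operator on a complex Hilbert space H and e ∈ H a unit vector. For real c outside the spectrum of T set r(c) = ⟨(T − c)^{-1} e, e⟩, φ(c) = arctan r(c), and κ_c = cos φ(c) · (T − c)^{-1} e. Then the map c ↦ κ_c from ℝ \ σ(T) to H is differentiable, and for any two distinct reals c, c′ outside the spectrum of T its derivative κ′_c satisfies ⟨κ′_c, κ_{c′}⟩ = φ′(c) · cos(φ(c) − φ(c′))/(c − c′) − sin(φ(c) − φ(c′))/(c − c′)², where φ′(c) = ‖(T − c)^{-1} e‖²/(1 + r(c)²). -/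

import Mathlib

open scoped InnerProductSpace

lemma aux_app {H : Type*} [NormedAddCommGroup H] [InnerProductSpace ℂ H]
    [CompleteSpace H] (T : H →L[ℂ] H) (c : ℝ) (hc : (c : ℂ) ∉ spectrum ℂ T) (x : H) :
    T ((Ring.inverse (T - (c : ℂ) • 1)) x) - (c : ℂ) • (Ring.inverse (T - (c : ℂ) • 1)) x = x := by
  have hu : IsUnit (T - (c : ℂ) • 1) := by
    have h := spectrum.notMem_iff.mp hc
    rw [Algebra.algebraMap_eq_smul_one] at h
    simpa using h.neg
  have h := Ring.mul_inverse_cancel _ hu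
  have h2 := congrArg (fun S : H →L[ℂ] H => S x) h
  simpa using h2

lemma aux_symm {H : Type*} [NormedAddCommGroup H] [InnerProductSpace ℂ H]
    [CompleteSpace H] (T : H →L[ℂ] H) (hT : IsSelfAdjoint T) (u v : H) :
    ⟪T u, v⟫_ℂ = ⟪u, T v⟫_ℂ := hT.isSymmetric u v

lemma aux_deriv {H : Type*} [NormedAddCommGroup H] [InnerProductSpace ℂ H]
    [CompleteSpace H] (T : H →L[ℂ] H) (c : ℝ) (hc : (c : ℂ) ∉ spectrum ℂ T) (e : H) :
    HasDerivAt (fun x : ℝ => (Ring.inverse (T - (x : ℂ) • 1)) e)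
      ((Ring.inverse (T - (c : ℂ) • 1)) ((Ring.inverse (T - (c : ℂ) • 1)) e)) c := by
  have key : ∀ x : ℝ, Ring.inverse (T - (x : ℂ) • 1) = - resolvent T (x : ℂ) := by
    intro x
    rw [resolvent, Algebra.algebraMap_eq_smul_one]
    have hn : T - (x : ℂ) • 1 = -((x : ℂ) • 1 - T) := (neg_sub _ _).symm
    rw [hn]
    generalize (x : ℂ) • (1 : H →L[ℂ] H) - T = A
    by_cases hA : IsUnit A
    · obtain ⟨a, rfl⟩ := hA
      rw [← Units.val_neg, Ring.inverse_unit, Ring.inverse_unit]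
      simp
    · rw [Ring.inverse_non_unit _ hA, Ring.inverse_non_unit _ (by simpa using hA), neg_zero]
  have h1 : HasDerivAt (resolvent T) (-resolvent T (c : ℂ) ^ 2) (c : ℂ) :=
    spectrum.hasDerivAt_resolvent_const_left (spectrum.notMem_iff.mp hc)
  have h2 := (h1.clm_apply (hasDerivAt_const (c : ℂ) e)).neg
  have h3 := h2.scomp c Complex.ofRealCLM.hasDerivAt
  simp only [key]
  refine h3.congr_deriv ?_
  simp [pow_two]

/-- Let `T` be a bounded self-adjoint operator on a complex Hilbert
space and `e` a unit vector. With `r(c) = ⟨(T−c)⁻¹e, e⟩` (real), `φ(c) = arctan r(c)`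
and `κ_c = cos φ(c) · (T−c)⁻¹ e`, the map `c ↦ κ_c` is differentiable on `ℝ \ σ(T)`,
and for distinct `c, c′` outside the spectrum its derivative satisfies
`⟨κ′_c, κ_{c′}⟩ = φ′(c)·cos(φ(c)−φ(c′))/(c−c′) − sin(φ(c)−φ(c′))/(c−c′)²`,
where `φ′(c) = ‖(T−c)⁻¹e‖²/(1+r(c)²)`. -/
theorem statement19 {H : Type*} [NormedAddCommGroup H] [InnerProductSpace ℂ H]
    [CompleteSpace H]
    (T : H →L[ℂ] H) (hT : IsSelfAdjoint T) (e : H) (he : ‖e‖ = 1)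
    (r φ : ℝ → ℝ) (κ : ℝ → H)
    (hr : ∀ c : ℝ, (r c : ℂ) = ⟪(Ring.inverse (T - (c : ℂ) • 1)) e, e⟫_ℂ)
    (hφ : ∀ c : ℝ, φ c = Real.arctan (r c))
    (hκ : ∀ c : ℝ, κ c = ((Real.cos (φ c) : ℂ)) • (Ring.inverse (T - (c : ℂ) • 1)) e) :
    (∀ c : ℝ, (c : ℂ) ∉ spectrum ℂ T → DifferentiableAt ℝ κ c) ∧
      ∀ c c' : ℝ, (c : ℂ) ∉ spectrum ℂ T → (c' : ℂ) ∉ spectrum ℂ T → c ≠ c' →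
        ⟪deriv κ c, κ c'⟫_ℂ =
          (((‖(Ring.inverse (T - (c : ℂ) • 1)) e‖ ^ 2 / (1 + r c ^ 2)) *
              (Real.cos (φ c - φ c') / (c - c')) -
            Real.sin (φ c - φ c') / (c - c') ^ 2 : ℝ) : ℂ) := by
  have hderR := fun c hc => aux_deriv T c hc e
  have hderr : ∀ c : ℝ, (c : ℂ) ∉ spectrum ℂ T →
      HasDerivAt r (‖(Ring.inverse (T - (c : ℂ) • 1)) e‖ ^ 2) c := by
    intro c hc
    have h1 := (hderR c hc).inner ℂ (hasDerivAt_const c e)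
    have h2 := Complex.reCLM.hasFDerivAt.comp_hasDerivAt c h1
    have hre : r = Complex.reCLM ∘ fun x : ℝ => ⟪(Ring.inverse (T - (x : ℂ) • 1)) e, e⟫_ℂ := by
      funext x
      rw [Function.comp_apply, ← hr x]
      rfl
    rw [hre]
    refine h2.congr_deriv ?_
    set u := (Ring.inverse (T - (c : ℂ) • 1)) e with hu
    have e1 := aux_app T c hc e
    have e2 := aux_app T c hc u
    rw [← hu] at e1
    set w := (Ring.inverse (T - (c : ℂ) • 1)) u with hw
    have : ⟪w, e⟫_ℂ = ⟪u, u⟫_ℂ := by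
      have g1 : ⟪w, e⟫_ℂ = ⟪w, T u - (c : ℂ) • u⟫_ℂ := by rw [e1]
      have g2 : ⟪u, u⟫_ℂ = ⟪T w - (c : ℂ) • w, u⟫_ℂ := by rw [e2]
      rw [g1, g2, inner_sub_left, inner_smul_left, aux_symm T hT, inner_sub_right,
        inner_smul_right, Complex.conj_ofReal]
    rw [this, inner_self_eq_norm_sq_to_K]
    simp [← Complex.ofReal_pow]
  have hderφ : ∀ c : ℝ, (c : ℂ) ∉ spectrum ℂ T →
      HasDerivAt φ (‖(Ring.inverse (T - (c : ℂ) • 1)) e‖ ^ 2 / (1 + r c ^ 2)) c := by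
    intro c hc
    have h := (hderr c hc).arctan
    have hf : φ = fun x => Real.arctan (r x) := funext hφ
    rw [hf]
    convert h using 1
    ring
  have hdκ : ∀ c : ℝ, (c : ℂ) ∉ spectrum ℂ T → DifferentiableAt ℝ κ c := by
    intro c hc
    have hf : κ = fun x : ℝ => Real.cos (φ x) • (Ring.inverse (T - (x : ℂ) • 1)) e := by
      funext x
      rw [hκ x, Complex.coe_smul]
    rw [hf]
    exact (hderφ c hc).cos.differentiableAt.smul (hderR c hc).differentiableAt
  refine ⟨hdκ, ?_⟩
  intro c c' hc hc' hne
  have hinner : ∀ x : ℝ, (x : ℂ) ∉ spectrum ℂ T → x ≠ c' →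
      ⟪κ x, κ c'⟫_ℂ = ((Real.sin (φ x - φ c') / (x - c') : ℝ) : ℂ) := by
    intro x hx hxc
    have e1 := aux_app T x hx e
    have e2 := aux_app T c' hc' e
    have r1 := hr x
    have r2 := hr c'
    rw [hκ x, hκ c', inner_smul_left, inner_smul_right, Complex.conj_ofReal]
    set u := (Ring.inverse (T - (x : ℂ) • 1)) e with hu
    set v := (Ring.inverse (T - (c' : ℂ) • 1)) e with hv
    have r3 : (r c' : ℂ) = ⟪e, v⟫_ℂ := by
      rw [← inner_conj_symm, ← r2, Complex.conj_ofReal]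
    rw [← e2, inner_sub_right, inner_smul_right] at r1
    rw [← e1, inner_sub_left, inner_smul_left, aux_symm T hT, Complex.conj_ofReal] at r3
    have hd : x - c' ≠ 0 := sub_ne_zero.mpr hxc
    have hdC : ((x : ℂ) - c') ≠ 0 := by exact_mod_cast hd
    have huv : ⟪u, v⟫_ℂ = (((r x - r c') / (x - c') : ℝ) : ℂ) := by
      push_cast
      rw [eq_div_iff hdC]
      linear_combination r3 - r1
    have hs : Real.sin (φ x - φ c') = Real.cos (φ x) * Real.cos (φ c') * (r x - r c') := by
      have t1 : r x = Real.sin (φ x) / Real.cos (φ x) := by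
        rw [← Real.tan_eq_sin_div_cos, hφ, Real.tan_arctan]
      have t2 : r c' = Real.sin (φ c') / Real.cos (φ c') := by
        rw [← Real.tan_eq_sin_div_cos, hφ, Real.tan_arctan]
      have p1 : Real.cos (φ x) ≠ 0 := by rw [hφ]; exact (Real.cos_arctan_pos _).ne'
      have p2 : Real.cos (φ c') ≠ 0 := by rw [hφ]; exact (Real.cos_arctan_pos _).ne'
      rw [t1, t2, Real.sin_sub]
      field_simp
    rw [huv, hs]
    push_cast
    ring
  have hL := (hdκ c hc).hasDerivAt.inner ℂ (hasDerivAt_const c (κ c'))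
  have hd : c - c' ≠ 0 := sub_ne_zero.mpr hne
  have hR := ((((hderφ c hc).sub_const (φ c')).sin).div
    ((hasDerivAt_id c).sub_const c') hd).ofReal_comp
  have hev : (fun x : ℝ => ⟪κ x, κ c'⟫_ℂ) =ᶠ[nhds c]
      fun x : ℝ => ((Real.sin (φ x - φ c') / (x - c') : ℝ) : ℂ) := by
    have o1 : ∀ᶠ x : ℝ in nhds c, (x : ℂ) ∉ spectrum ℂ T :=
      Complex.continuous_ofReal.continuousAt.eventually
        ((spectrum.isClosed (𝕜 := ℂ) T).isOpen_compl.mem_nhds hc)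
    filter_upwards [o1, isOpen_ne.mem_nhds hne] with x hx hx2
    exact hinner x hx hx2
  have huniq := hL.unique (HasDerivAt.congr_of_eventuallyEq hR hev)
  rw [inner_zero_right, zero_add] at huniq
  rw [huniq]
  congr 1
  simp only [id]
  field_simp
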